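/- arXiv:1011.1663 — 6 statements merged into one kernel-verified Lean document; each statement's English description precedes it below -/
import Mathlib

section
/- Let (R, m) be a commutative Noetherian local ring having infinitely many prime ideals. Then the class (FG, FS) is not closed under injective hulls; that is, there exists an R-module X belonging to (FG, FS) whose injective hull E_R(X) does not belong to (FG, FS). -/
universe u

/-- The class `(FG, FS)`: an `R`-module `X` belongs to `(FG, FS)` if it has a finitely
generated submodule `F` such that `X ⧸ F` has finite support, i.e. `X` is an extension of a
module with finite support by a finitely generated module. -/
def InFGFS (R : Type u) [CommRing R] (X : Type u) [AddCommGroup X] [Module R X] : Prop :=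
  ∃ F : Submodule R X, F.FG ∧ (Module.support R (X ⧸ F)).Finite

/-- `f : X →ₗ[R] E` realizes `E` as an injective hull of `X`: `E` is injective, `f` is
injective, and the image of `f` is an essential submodule of `E`. -/
def IsInjectiveHull (R : Type u) [CommRing R] {X E : Type u} [AddCommGroup X] [Module R X]
    [AddCommGroup E] [Module R E] (f : X →ₗ[R] E) : Prop :=
  Module.Injective R E ∧ Function.Injective f ∧
    ∀ N : Submodule R E, N ≠ ⊥ → N ⊓ LinearMap.range f ≠ ⊥

/-! Some prime `p` has infinitely many primes above it. Suppose that `E` is injective, contains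
`R ⧸ p` and is in `(FG, FS)`. Then so is `Hom(R ⧸ p, E)`, which embeds in `E` by evaluation at `1`;
hence it becomes finitely generated after localization at all but finitely many primes `q`. If `q`
strictly contains `p`, any `r ∈ q` outside `p` acts surjectively on `Hom(R ⧸ p, E)`, so at almost
all such `q` Nakayama's lemma makes the localization vanish. But the support of `Hom(R ⧸ p, E)`
contains the infinite set `V(p)`. -/

open PrimeSpectrum

section Support

variable {R M X E : Type*} [CommRing R] [AddCommGroup M] [Module R M]
  [AddCommGroup X] [Module R X] [AddCommGroup E] [Module R E]

theorem exists_mem_minimalPrimes_zeroLocus_infinite [Infinite (PrimeSpectrum R)]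
    (hmin : (minimalPrimes R).Finite) :
    ∃ p ∈ minimalPrimes R, (zeroLocus (p : Set R)).Infinite := by
  by_contra! hfin
  have hcover : ⋃ p ∈ minimalPrimes R, zeroLocus (p : Set R) = Set.univ := by
    refine Set.eq_univ_of_forall fun q ↦ ?_
    obtain ⟨p, hp, hpq⟩ := Ideal.exists_minimalPrimes_le (bot_le : ⊥ ≤ q.asIdeal)
    exact Set.mem_biUnion hp hpq
  exact Set.infinite_univ (hcover ▸ hmin.biUnion hfin)

theorem support_subset_support_linearMap_of_injective [Module.Finite R M] {f : M →ₗ[R] E}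
    (hf : Function.Injective f) : Module.support R M ⊆ Module.support R (M →ₗ[R] E) := by
  intro q hq
  refine Module.mem_support_iff_exists_annihilator.mpr ⟨f, fun a ha ↦ ?_⟩
  have haf : a • f = 0 := (Submodule.mem_annihilator_span_singleton f a).mp ha
  refine Module.mem_support_iff_of_finite.mp hq (Module.mem_annihilator.mpr fun m ↦ hf ?_)
  simpa using LinearMap.congr_fun haf m

theorem support_inter_zeroLocus_subset_support_quotient {F : Submodule R X} (hF : F.FG) {r : R}
    (hr : Function.Surjective (r • · : X → X)) :
    Module.support R X ∩ zeroLocus {r} ⊆ Module.support R (X ⧸ F) := by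
  rintro q ⟨hqX, hrq⟩
  by_contra hqXF
  have hlocal : ∀ x : X, ∃ s ∉ q.asIdeal, s • x ∈ F := fun x ↦ by
    simpa [← Submodule.Quotient.mk_smul] using
      Module.notMem_support_iff'.mp hqXF (Submodule.Quotient.mk x)
  have hqFr : q ∉ Module.support R (QuotSMulTop r F) := by
    refine Module.notMem_support_iff'.mpr fun y ↦ ?_
    obtain ⟨x, rfl⟩ := Submodule.Quotient.mk_surjective _ y
    obtain ⟨z, hz : r • z = x⟩ := hr x
    obtain ⟨s, hs, hsz⟩ := hlocal z
    refine ⟨s, hs, (Submodule.Quotient.mk_eq_zero _).mpr ?_⟩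
    exact ⟨⟨s • z, hsz⟩, trivial, Subtype.ext (by simp [← hz, smul_comm r s])⟩
  have : Module.Finite R F := Module.Finite.of_fg hF
  have hqF : q ∉ Module.support R F := fun hq ↦
    hqFr (Module.support_quotSMulTop (M := F) r ▸ ⟨hq, hrq⟩)
  have hsupp := Module.support_of_exact (LinearMap.exact_subtype_mkQ F) F.injective_subtype
    F.mkQ_surjective
  exact (hsupp ▸ hqX).elim hqF hqXF

end Support

theorem smul_linearMap_surjective_of_isSMulRegular {R : Type*} {M E : Type u} [CommRing R]
    [AddCommGroup M] [Module R M] [AddCommGroup E] [Module R E] [Module.Injective R E] {r : R}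
    (hr : IsSMulRegular M r) :
    Function.Surjective (r • · : (M →ₗ[R] E) → (M →ₗ[R] E)) := by
  intro g
  obtain ⟨g', hg'⟩ := Module.Injective.out (LinearMap.lsmul R M r) hr g
  exact ⟨g', LinearMap.ext fun x ↦ (map_smul g' r x).symm.trans (hg' x)⟩

section InFGFS

variable {R X Y E : Type u} [CommRing R] [AddCommGroup X] [Module R X] [AddCommGroup Y] [Module R Y]
  [AddCommGroup E] [Module R E]

theorem InFGFS.of_finite [Module.Finite R X] : InFGFS R X :=
  ⟨⊤, Module.Finite.fg_top, by simp only [Module.support_eq_empty, Set.finite_empty]⟩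

theorem InFGFS.of_injective [IsNoetherianRing R] (hY : InFGFS R Y) (f : X →ₗ[R] Y)
    (hf : Function.Injective f) : InFGFS R X := by
  obtain ⟨F, hF, hfin⟩ := hY
  refine ⟨F.comap f, ?_, hfin.subset (Module.support_subset_of_injective
    ((F.comap f).mapQ F f le_rfl) ?_)⟩
  · have : IsNoetherian R F := isNoetherian_of_fg_of_noetherian F hF
    have hrestrict : Function.Injective (f.restrict (p := F.comap f) fun _ hx ↦ hx) :=
      fun x y hxy ↦ Subtype.ext (hf (congrArg Subtype.val hxy))
    exact Module.Finite.iff_fg.mp (Module.Finite.of_injective _ hrestrict)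
  · rw [← LinearMap.ker_eq_bot, Submodule.ker_mapQ, Submodule.mkQ_map_self]

theorem InFGFS.linearMap_quotient [IsNoetherianRing R] (hE : InFGFS R E) (I : Ideal R) :
    InFGFS R ((R ⧸ I) →ₗ[R] E) :=
  hE.of_injective (LinearMap.applyₗ 1) fun _ _ h ↦
    Submodule.linearMap_qext _ (LinearMap.ext_ring h)

theorem InFGFS.finite_support_inter_setOf_smul_surjective (hX : InFGFS R X) :
    (Module.support R X ∩
      {q | ∃ r ∈ q.asIdeal, Function.Surjective (r • · : X → X)}).Finite := by
  obtain ⟨F, hF, hfin⟩ := hX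
  refine hfin.subset ?_
  rintro q ⟨hqX, r, hrq, hr⟩
  exact support_inter_zeroLocus_subset_support_quotient hF hr
    ⟨hqX, Set.singleton_subset_iff.mpr hrq⟩

theorem not_inFGFS_of_injective_of_zeroLocus_infinite [IsNoetherianRing R] [Module.Injective R E]
    {p : Ideal R} [hp : p.IsPrime] (hinf : (zeroLocus (p : Set R)).Infinite)
    {f : (R ⧸ p) →ₗ[R] E} (hf : Function.Injective f) : ¬ InFGFS R E := by
  intro hE
  have hsupp : zeroLocus (p : Set R) ⊆ Module.support R ((R ⧸ p) →ₗ[R] E) := by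
    simpa only [Module.support_eq_zeroLocus (M := R ⧸ p), Ideal.annihilator_quotient] using
      support_subset_support_linearMap_of_injective hf
  have hdiv : ∀ q ∈ zeroLocus (p : Set R), q ≠ ⟨p, hp⟩ → ∃ r ∈ q.asIdeal,
      Function.Surjective (r • · : ((R ⧸ p) →ₗ[R] E) → ((R ⧸ p) →ₗ[R] E)) := by
    intro q hpq hqp
    obtain ⟨r, hrq, hrp⟩ : ∃ r ∈ q.asIdeal, r ∉ p := SetLike.not_le_iff_exists.mp fun hle ↦
      hqp (PrimeSpectrum.ext (le_antisymm hle hpq))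
    refine ⟨r, hrq, smul_linearMap_surjective_of_isSMulRegular ?_⟩
    exact (isSMulRegular_quotient_iff_mem_of_smul_mem p r).mpr fun a hra ↦
      (hp.mem_or_mem hra).resolve_left hrp
  refine hinf.sdiff (Set.finite_singleton ⟨p, hp⟩) (Set.Finite.subset
    (hE.linearMap_quotient p).finite_support_inter_setOf_smul_surjective ?_)
  exact fun q ⟨hpq, hqp⟩ ↦ ⟨hsupp hpq, hdiv q hpq hqp⟩

theorem fgfs_not_closed_under_injective_hulls_general (R : Type u) [CommRing R]
    [IsNoetherianRing R] (h : Infinite (PrimeSpectrum R)) :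
    ∃ X : ModuleCat.{u} R, InFGFS R X ∧
      ∀ (E : Type u) [AddCommGroup E] [Module R E] (f : X →ₗ[R] E),
        Module.Injective R E → Function.Injective f → ¬ InFGFS R E := by
  obtain ⟨p, hp, hinf⟩ := exists_mem_minimalPrimes_zeroLocus_infinite
    (minimalPrimes.finite_of_isNoetherianRing R)
  have : p.IsPrime := hp.1.1
  exact ⟨ModuleCat.of R (R ⧸ p), .of_finite, fun E _ _ f _ hf ↦
    not_inFGFS_of_injective_of_zeroLocus_infinite hinf hf⟩

end InFGFS

/-- If `(R, m)` is a commutative Noetherian local ring with infinitely many prime ideals, then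
`(FG, FS)` is not closed under injective hulls: there is an `R`-module `X` in `(FG, FS)` whose
injective hull does not belong to `(FG, FS)`. -/
theorem fgfs_not_closed_under_injective_hulls
    (R : Type u) [CommRing R] [IsNoetherianRing R] [IsLocalRing R]
    (h : Infinite (PrimeSpectrum R)) :
    ∃ X : ModuleCat.{u} R, InFGFS R X ∧
      ∀ (E : Type u) [AddCommGroup E] [Module R E] (f : X →ₗ[R] E),
        IsInjectiveHull R f → ¬ InFGFS R E := by
  obtain ⟨X, hX, hE⟩ := fgfs_not_closed_under_injective_hulls_general R h
  exact ⟨X, hX, fun E _ _ f hf ↦ hE E f hf.1 hf.2.1⟩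
end

section
/- Let (R, m) be a commutative Noetherian local ring and let p be a prime ideal of R such that V(p) = {q ∈ Spec(R) : p ⊆ q} is an infinite set. Then the injective hull E_R(R/p) of R/p does not belong to (FG, FS); that is, there is no finitely generated R-submodule F of E_R(R/p) such that E_R(R/p)/F has finite support. -/
universe u

/-!
An element regular on `X` stays regular on an injective hull `E` of `X`, and injectivity of `E`
then makes it act surjectively. If `E ⧸ F` vanishes at a prime `q`, then `E_q = F_q` is finitely
generated; if moreover `q` contains an element acting surjectively on `E`, Nakayama forces
`E_q = 0`. For `X = R ⧸ p` every prime `q ⊋ p` contains such an element, while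
`E_q ⊇ (R ⧸ p)_q ≠ 0`, so `E ⧸ F` is supported at all of these infinitely many `q`.
-/

section CommRing

variable {R : Type*} [CommRing R] {M : Type*} [AddCommGroup M] [Module R M] {x : R}

theorem subsingleton_of_surjective_smul_of_mem_jacobson_bot [Module.Finite R M]
    (hx : x ∈ (⊥ : Ideal R).jacobson) (hM : Function.Surjective (x • · : M → M)) :
    Subsingleton M := by
  have htop : (⊤ : Submodule R M) ≤ Ideal.span {x} • ⊤ := fun m _ ↦ by
    obtain ⟨n, rfl⟩ := hM m
    exact Submodule.smul_mem_smul (Ideal.mem_span_singleton_self x) Submodule.mem_top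
  exact (Submodule.subsingleton_iff R).mp <| subsingleton_of_bot_eq_top <| Eq.symm <|
    Submodule.eq_bot_of_le_smul_of_le_jacobson_bot _ _ Module.Finite.fg_top htop
      ((Ideal.span_singleton_le_iff_mem _).mpr hx)

theorem surjective_algebraMap_smul_localizedModule (S : Submonoid R)
    (hM : Function.Surjective (x • · : M → M)) :
    Function.Surjective (algebraMap R (Localization S) x • · :
      LocalizedModule S M → LocalizedModule S M) := by
  intro y
  induction y with | _ m s
  obtain ⟨n, rfl⟩ := hM m
  exact ⟨.mk n s, by simp only [algebraMap_smul, LocalizedModule.smul'_mk]⟩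

theorem finite_localizedModule_of_subsingleton_localizedModule_quotient {S : Submonoid R}
    {F : Submodule R M} (hF : F.FG) [Subsingleton (LocalizedModule S (M ⧸ F))] :
    Module.Finite (Localization S) (LocalizedModule S M) := by
  have : Module.Finite R F := Module.Finite.iff_fg.mpr hF
  have hexact := LocalizedModule.map_exact S F.subtype F.mkQ (LinearMap.exact_subtype_mkQ F)
  exact Module.Finite.of_surjective (LocalizedModule.map S F.subtype) fun y ↦
    (hexact y).mp (Subsingleton.elim _ _)

theorem mem_support_quotient_of_surjective_smul {q : PrimeSpectrum R} {F : Submodule R M}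
    (hF : F.FG) (hxq : x ∈ q.asIdeal) (hM : Function.Surjective (x • · : M → M))
    (hq : q ∈ Module.support R M) : q ∈ Module.support R (M ⧸ F) := by
  contrapose! hq
  rw [Module.notMem_support_iff] at hq ⊢
  have : Module.Finite (Localization.AtPrime q.asIdeal)
      (LocalizedModule q.asIdeal.primeCompl M) :=
    finite_localizedModule_of_subsingleton_localizedModule_quotient hF
  have hx : algebraMap R (Localization.AtPrime q.asIdeal) x ∈ (⊥ : Ideal _).jacobson := by
    rwa [IsLocalRing.jacobson_eq_maximalIdeal ⊥ bot_ne_top,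
      IsLocalization.AtPrime.to_map_mem_maximal_iff _ q.asIdeal]
  exact subsingleton_of_surjective_smul_of_mem_jacobson_bot hx
    (surjective_algebraMap_smul_localizedModule _ hM)

theorem surjective_smul_of_injective_of_isSMulRegular [Module.Injective R M]
    (hx : IsSMulRegular M x) : Function.Surjective (x • · : M → M) := by
  obtain ⟨g, hg⟩ := Module.Injective.out (LinearMap.lsmul R M x) hx LinearMap.id
  exact fun m ↦ ⟨g m, by simpa using hg m⟩

theorem isSMulRegular_quotient_of_notMem {p : Ideal R} (hp : p.IsPrime) (hx : x ∉ p) :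
    IsSMulRegular (R ⧸ p) x :=
  (isSMulRegular_quotient_iff_mem_of_smul_mem p x).mpr fun _ h ↦
    (hp.mem_or_mem h).resolve_left hx

theorem mem_support_quotient_ideal_iff {I : Ideal R} {q : PrimeSpectrum R} :
    q ∈ Module.support R (R ⧸ I) ↔ I ≤ q.asIdeal := by
  rw [Module.support_eq_zeroLocus, Ideal.annihilator_quotient, PrimeSpectrum.mem_zeroLocus,
    SetLike.coe_subset_coe]

end CommRing

section InjectiveHull

variable {R : Type u} [CommRing R] {X E : Type u} [AddCommGroup X] [Module R X]
  [AddCommGroup E] [Module R E] {f : X →ₗ[R] E} {x : R}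

namespace IsInjectiveHull

theorem isSMulRegular (hf : IsInjectiveHull R f) (hx : IsSMulRegular X x) :
    IsSMulRegular E x := by
  obtain ⟨-, hinj, hess⟩ := hf
  rw [isSMulRegular_iff_ker_lsmul_eq_bot]
  by_contra hker
  refine hess _ hker ((Submodule.eq_bot_iff _).mpr ?_)
  rintro _ ⟨hxz, z, rfl⟩
  have hz : f (x • z) = 0 := (map_smul f x z).trans hxz
  rw [hx.right_eq_zero_of_smul ((map_eq_zero_iff f hinj).mp hz), map_zero]

theorem mem_support_quotient (hf : IsInjectiveHull R f) {F : Submodule R E} (hF : F.FG)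
    {q : PrimeSpectrum R} (hq : q ∈ Module.support R X) (hxq : x ∈ q.asIdeal)
    (hx : IsSMulRegular X x) : q ∈ Module.support R (E ⧸ F) := by
  have : Module.Injective R E := hf.1
  exact mem_support_quotient_of_surjective_smul hF hxq
    (surjective_smul_of_injective_of_isSMulRegular (hf.isSMulRegular hx))
    (Module.support_subset_of_injective f hf.2.1 hq)

theorem mem_support_quotient_of_lt {p : Ideal R} (hp : p.IsPrime) {f : (R ⧸ p) →ₗ[R] E}
    (hf : IsInjectiveHull R f) {F : Submodule R E} (hF : F.FG) {q : PrimeSpectrum R}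
    (hpq : p < q.asIdeal) : q ∈ Module.support R (E ⧸ F) := by
  obtain ⟨x, hxq, hxp⟩ := SetLike.exists_of_lt hpq
  exact hf.mem_support_quotient hF (mem_support_quotient_ideal_iff.mpr hpq.le) hxq
    (isSMulRegular_quotient_of_notMem hp hxp)

end IsInjectiveHull

end InjectiveHull

theorem injective_hull_quotient_prime_not_in_fgfs_general
    (R : Type u) [CommRing R] (p : Ideal R) (hp : p.IsPrime)
    (hV : {q : PrimeSpectrum R | p ≤ q.asIdeal}.Infinite)
    (E : Type u) [AddCommGroup E] [Module R E] (f : (R ⧸ p) →ₗ[R] E)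
    (hf : IsInjectiveHull R f) : ¬ InFGFS R E := by
  rintro ⟨F, hF, hfin⟩
  obtain ⟨q, ⟨hpq, hqp⟩, hq⟩ :=
    ((hV.sdiff (Set.finite_singleton ⟨p, hp⟩)).sdiff hfin).nonempty
  have hlt : p < q.asIdeal := lt_of_le_of_ne hpq fun h ↦ hqp (PrimeSpectrum.ext h.symm)
  exact hq (hf.mem_support_quotient_of_lt hp hF hlt)

/-- If `(R, m)` is a commutative Noetherian local ring and `p` is a prime ideal with `V(p)`
infinite, then the injective hull of `R ⧸ p` does not belong to `(FG, FS)`. -/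
theorem injective_hull_quotient_prime_not_in_fgfs
    (R : Type u) [CommRing R] [IsNoetherianRing R] [IsLocalRing R]
    (p : Ideal R) (hp : p.IsPrime)
    (hV : {q : PrimeSpectrum R | p ≤ q.asIdeal}.Infinite) :
    ∀ (E : Type u) [AddCommGroup E] [Module R E] (f : (R ⧸ p) →ₗ[R] E),
      IsInjectiveHull R f → ¬ InFGFS R E :=
  injective_hull_quotient_prime_not_in_fgfs_general R p hp hV
end

section
/- Let (R, m) be a 2-dimensional commutative Noetherian local domain. Then the class (FG, FS) satisfies condition C_I for every ideal I of R; that is, for every ideal I of R and every R-module X such that X = Γ_I(X) and (0 :_X I) belongs to (FG, FS), the module X itself belongs to (FG, FS). In other words, (FG, FS) is a Melkersson subcategory. -/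
universe u

/-!
If `I = 0`, then `(0 :_X I) = X` and there is nothing to prove. If `I ≠ 0`, then every nonzero
element of `I` is a nonzerodivisor, so `R ⧸ I` has dimension at most one. A prime containing `I` is
therefore minimal over `I` or maximal, and there are only finitely many of either kind. As an
`I`-torsion module is supported on `V(I)`, it has finite support, hence belongs to `(FG, FS)` with
`F = 0`.
-/

open PrimeSpectrum TopologicalSpace nonZeroDivisors

section ZeroLocus

variable {R : Type*} [CommRing R] (I : Ideal R)

lemma finite_minimalPrimes_of_noetherianSpace [NoetherianSpace (PrimeSpectrum R)] :
    I.minimalPrimes.Finite :=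
  have : Finite (irreducibleComponents (zeroLocus (I : Set R))) :=
    NoetherianSpace.finite_irreducibleComponents
  .of_equiv _ (Ideal.minimalPrimes.equivIrreducibleComponents I).toEquiv.symm

variable {I}

lemma mem_minimalPrimes_or_isMaximal_of_krullDimLE_one_quotient [Ring.KrullDimLE 1 (R ⧸ I)]
    {p : PrimeSpectrum R} (hp : I ≤ p.asIdeal) :
    p.asIdeal ∈ I.minimalPrimes ∨ p.asIdeal.IsMaximal := by
  have hp_range : p ∈ Set.range (comap (Ideal.Quotient.mk I)) := by
    rwa [range_comap_of_surjective _ _ Ideal.Quotient.mk_surjective, Ideal.mk_ker]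
  obtain ⟨q, rfl⟩ := hp_range
  rw [Ideal.minimalPrimes_eq_comap]
  exact (Ring.krullDimLE_one_iff.mp ‹_› q.asIdeal q.isPrime).imp (Set.mem_image_of_mem _)
    fun _ : q.asIdeal.IsMaximal ↦
      Ideal.comap_isMaximal_of_surjective _ Ideal.Quotient.mk_surjective

lemma finite_zeroLocus_of_krullDimLE_one_quotient [Finite (MaximalSpectrum R)]
    [Ring.KrullDimLE 1 (R ⧸ I)] (hI : I.minimalPrimes.Finite) :
    (zeroLocus (I : Set R)).Finite := by
  have hmin : (asIdeal ⁻¹' I.minimalPrimes).Finite :=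
    hI.preimage fun _ _ _ _ ↦ PrimeSpectrum.ext
  have hmax : (Set.range (MaximalSpectrum.toPrimeSpectrum (R := R))).Finite :=
    Set.finite_range _
  refine (hmin.union hmax).subset fun p hp ↦ ?_
  exact (mem_minimalPrimes_or_isMaximal_of_krullDimLE_one_quotient hp).imp_right
    fun h ↦ ⟨⟨p.asIdeal, h⟩, rfl⟩

lemma krullDimLE_quotient_of_mem_nonZeroDivisors {n : ℕ} (hdim : ringKrullDim R ≤ n + 1)
    {r : R} (hr : r ∈ R⁰) (hrI : r ∈ I) : Ring.KrullDimLE n (R ⧸ I) := by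
  have hquot : ringKrullDim (R ⧸ I) + 1 ≤ ringKrullDim R :=
    ringKrullDim_succ_le_of_surjective _ Ideal.Quotient.mk_surjective hr
      (Ideal.Quotient.eq_zero_iff_mem.mpr hrI)
  exact Ring.krullDimLE_iff.mpr <|
    ENat.WithBot.add_le_add_one_right_iff.mp (hquot.trans hdim)

lemma finite_zeroLocus_of_mem_nonZeroDivisors [NoetherianSpace (PrimeSpectrum R)]
    [Finite (MaximalSpectrum R)] (hdim : ringKrullDim R ≤ 2)
    {r : R} (hr : r ∈ R⁰) (hrI : r ∈ I) : (zeroLocus (I : Set R)).Finite :=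
  have : Ring.KrullDimLE 1 (R ⧸ I) :=
    krullDimLE_quotient_of_mem_nonZeroDivisors (by simpa [one_add_one_eq_two]) hr hrI
  finite_zeroLocus_of_krullDimLE_one_quotient (finite_minimalPrimes_of_noetherianSpace I)

end ZeroLocus

section Torsion

variable {R M : Type*} [CommRing R] [AddCommGroup M] [Module R M]

lemma torsionBySet_bot : Submodule.torsionBySet R M ((⊥ : Ideal R) : Set R) = ⊤ := by
  ext x
  simp

lemma support_subset_zeroLocus_of_forall_pow_smul_eq_zero {I : Ideal R}
    (hM : ∀ x : M, ∃ n : ℕ, ∀ a ∈ I ^ n, a • x = 0) :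
    Module.support R M ⊆ zeroLocus (I : Set R) := by
  intro p hp
  obtain ⟨x, hx⟩ := Module.mem_support_iff_exists_annihilator.mp hp
  obtain ⟨n, hn⟩ := hM x
  have hpow : I ^ n ≤ (Submodule.span R {x}).annihilator := fun a ha ↦
    (Submodule.mem_annihilator_span_singleton x a).mpr (hn a ha)
  exact p.isPrime.le_of_pow_le (hpow.trans hx)

end Torsion

namespace InFGFS

variable {R X Y : Type u} [CommRing R] [AddCommGroup X] [Module R X] [AddCommGroup Y] [Module R Y]

lemma of_linearEquiv (e : X ≃ₗ[R] Y) (hX : InFGFS R X) : InFGFS R Y := by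
  obtain ⟨F, hF, hsupp⟩ := hX
  refine ⟨F.map (e : X →ₗ[R] Y), hF.map _, ?_⟩
  rwa [← (Submodule.Quotient.equiv F _ e rfl).support_eq]

lemma of_finite_support (hX : (Module.support R X).Finite) : InFGFS R X :=
  ⟨⊥, Submodule.fg_bot, by rwa [(Submodule.quotEquivOfEqBot _ rfl).support_eq]⟩

end InFGFS

theorem fgfs_is_melkersson_general (R : Type u) [CommRing R] [IsDomain R]
    [NoetherianSpace (PrimeSpectrum R)] [Finite (MaximalSpectrum R)] (hdim : ringKrullDim R ≤ 2)
    (I : Ideal R) (X : Type u) [AddCommGroup X] [Module R X]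
    (hX : ∀ x : X, ∃ n : ℕ, ∀ a ∈ I ^ n, a • x = 0)
    (htors : InFGFS R ↥(Submodule.torsionBySet R X (I : Set R))) :
    InFGFS R X := by
  obtain rfl | hI := eq_or_ne I ⊥
  · exact htors.of_linearEquiv (.ofTop _ torsionBySet_bot)
  · obtain ⟨r, hrI, hr⟩ := Submodule.exists_mem_ne_zero_of_ne_bot hI
    have hV : (zeroLocus (I : Set R)).Finite :=
      finite_zeroLocus_of_mem_nonZeroDivisors hdim (mem_nonZeroDivisors_of_ne_zero hr) hrI
    exact .of_finite_support
      (hV.subset (support_subset_zeroLocus_of_forall_pow_smul_eq_zero hX))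

/-- If `(R, m)` is a `2`-dimensional commutative Noetherian local domain, then the class
`(FG, FS)` satisfies the condition `C_I` for every ideal `I` of `R`: whenever `X = Γ_I(X)`
(every element of `X` is annihilated by a power of `I`) and `(0 :_X I)` belongs to `(FG, FS)`,
then `X` belongs to `(FG, FS)`.  That is, `(FG, FS)` is a Melkersson subcategory. -/
theorem fgfs_is_melkersson
    (R : Type u) [CommRing R] [IsNoetherianRing R] [IsLocalRing R] [IsDomain R]
    (hdim : ringKrullDim R = 2) :
    ∀ (I : Ideal R) (X : Type u) [AddCommGroup X] [Module R X],
      (∀ x : X, ∃ n : ℕ, ∀ a ∈ I ^ n, a • x = 0) →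
      InFGFS R ↥(Submodule.torsionBySet R X (I : Set R)) →
      InFGFS R X :=
  fgfs_is_melkersson_general R hdim.le
end

section
/- Let (R, m) be a commutative Noetherian local ring and let M be a Serre subcategory of the category of R-modules that contains a nonzero R-module and satisfies condition C_m with respect to the maximal ideal m. Then every Artinian R-module belongs to M. In particular, every Melkersson subcategory containing a nonzero module contains all Artinian R-modules. -/
universe u

/-- A Serre subcategory of the category of `R`-modules: a class of `R`-modules, closed under
isomorphisms, submodules, quotient modules, and extensions. -/
structure SerreClass (R : Type u) [CommRing R] : Type (u + 1) where
  /-- membership predicate of the class -/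
  Mem : ∀ (M : Type u) [AddCommGroup M] [Module R M], Prop
  mem_of_iso : ∀ (M N : Type u) [AddCommGroup M] [Module R M] [AddCommGroup N] [Module R N],
    (M ≃ₗ[R] N) → Mem M → Mem N
  mem_of_submodule : ∀ (M : Type u) [AddCommGroup M] [Module R M] (N : Submodule R M),
    Mem M → Mem N
  mem_of_quotient : ∀ (M : Type u) [AddCommGroup M] [Module R M] (N : Submodule R M),
    Mem M → Mem (M ⧸ N)
  mem_of_extension : ∀ (M : Type u) [AddCommGroup M] [Module R M] (N : Submodule R M),
    Mem N → Mem (M ⧸ N) → Mem M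

/-- A Serre subcategory `S` satisfies the condition `C_I` if whenever `X = Γ_I(X)` (every
element of `X` is annihilated by some power of `I`) and `(0 :_X I) ∈ S`, then `X ∈ S`. -/
def SerreClass.SatisfiesC {R : Type u} [CommRing R] (S : SerreClass R) (I : Ideal R) : Prop :=
  ∀ (X : Type u) [AddCommGroup X] [Module R X],
    (∀ x : X, ∃ n : ℕ, ∀ a ∈ I ^ n, a • x = 0) →
    S.Mem ↥(Submodule.torsionBySet R X (I : Set R)) → S.Mem X

/-!
Let `I` be contained in the Jacobson radical of `R`, with `R ⧸ I` semiprimary, and let `M` be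
Artinian. For `x : M` the ring `R ⧸ ann x` is Artinian, so its Jacobson radical is nilpotent and a
power of `I` annihilates `x`; hence `M = Γ_I(M)`. The module `(0 :_M I)` is Artinian over the
semiprimary ring `R ⧸ I`, so it has finite length by Hopkins–Levitzki, and a Serre subcategory
containing the simple modules contains it. Condition `C_I` then yields `M`. When `R` is local and
`I` is its maximal ideal, the only simple module is the residue field, which is a subquotient of
every nonzero module.
-/

theorem exists_pow_smul_eq_zero_of_le_jacobson {R M : Type*} [CommRing R] [AddCommGroup M]
    [Module R M] [IsArtinian R M] {I : Ideal R} (hI : I ≤ Ring.jacobson R) (x : M) :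
    ∃ n : ℕ, ∀ a ∈ I ^ n, a • x = 0 := by
  let A := Ideal.torsionOf R M x
  have : IsArtinian R (R ⧸ A) :=
    isArtinian_of_linearEquiv (Ideal.quotTorsionOfEquivSpanSingleton R M x).symm
  have : IsArtinianRing (R ⧸ A) := isArtinian_of_tower R this
  obtain ⟨n, hn⟩ := IsSemiprimaryRing.isNilpotent (R := R ⧸ A)
  have hIA : I.map (Ideal.Quotient.mk A) ≤ Ring.jacobson (R ⧸ A) :=
    Ideal.map_le_iff_le_comap.mpr (hI.trans (Ring.le_comap_jacobson _))
  have hpow : (I ^ n).map (Ideal.Quotient.mk A) ≤ ⊥ := by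
    rw [Ideal.map_pow, ← Ideal.zero_eq_bot, ← hn]
    exact Ideal.pow_right_mono hIA n
  refine ⟨n, fun a ha ↦ (Ideal.mem_torsionOf_iff x a).mp ?_⟩
  exact Ideal.Quotient.eq_zero_iff_mem.mp (hpow (Ideal.mem_map_of_mem _ ha))

theorem isFiniteLength_of_isTorsionBySet {R M : Type*} [Ring R] [AddCommGroup M] [Module R M]
    [IsArtinian R M] {I : Ideal R} [I.IsTwoSided] [IsSemiprimaryRing (R ⧸ I)]
    (hM : Module.IsTorsionBySet R M I) : IsFiniteLength R M := by
  let _ := hM.module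
  have : IsArtinian (R ⧸ I) M :=
    (hM.semilinearMap.isArtinian_iff_of_bijective Function.bijective_id).mp inferInstance
  have : IsNoetherian (R ⧸ I) M := IsSemiprimaryRing.isNoetherian_iff_isArtinian.mpr this
  have : IsNoetherian R M :=
    (hM.semilinearMap.isNoetherian_iff_of_bijective Function.bijective_id).mpr this
  exact isFiniteLength_iff_isNoetherian_isArtinian.mpr ⟨this, inferInstance⟩

namespace SerreClass

variable {R : Type u} [CommRing R] (S : SerreClass R)
  {M N : Type u} [AddCommGroup M] [Module R M] [AddCommGroup N] [Module R N]

theorem mem_of_injective (f : M →ₗ[R] N) (hf : Function.Injective f) (hN : S.Mem N) : S.Mem M :=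
  S.mem_of_iso _ _ (LinearEquiv.ofInjective f hf).symm (S.mem_of_submodule _ _ hN)

theorem mem_of_surjective (f : M →ₗ[R] N) (hf : Function.Surjective f) (hM : S.Mem M) : S.Mem N :=
  S.mem_of_iso _ _ (f.quotKerEquivOfSurjective hf) (S.mem_of_quotient _ _ hM)

theorem exists_isMaximal_mem_quotient [Nontrivial M] (hM : S.Mem M) :
    ∃ p : Ideal R, p.IsMaximal ∧ S.Mem (R ⧸ p) := by
  obtain ⟨x, hx⟩ := exists_ne (0 : M)
  obtain ⟨p, hp, hxp⟩ := (Ideal.torsionOf R M x).exists_le_maximal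
    ((Ideal.torsionOf_eq_top_iff R x).not.mpr hx)
  have hRx : S.Mem (R ⧸ Ideal.torsionOf R M x) :=
    S.mem_of_iso _ _ (Ideal.quotTorsionOfEquivSpanSingleton R M x).symm
      (S.mem_of_submodule _ _ hM)
  exact ⟨p, hp, S.mem_of_surjective (Submodule.factor hxp) (Submodule.factor_surjective hxp) hRx⟩

theorem mem_of_isFiniteLength [Nontrivial R] (hS : ∀ p : Ideal R, p.IsMaximal → S.Mem (R ⧸ p))
    (hM : IsFiniteLength R M) : S.Mem M := by
  induction hM with
  | of_subsingleton =>
    obtain ⟨p, hp⟩ := Ideal.exists_maximal R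
    exact S.mem_of_injective (0 : _ →ₗ[R] R ⧸ p) (Function.injective_of_subsingleton _) (hS p hp)
  | @of_simple_quotient M _ _ P hP _ hPS =>
    obtain ⟨p, hp, ⟨e⟩⟩ := isSimpleModule_iff_quot_maximal.mp hP
    exact S.mem_of_extension M P hPS (S.mem_of_iso _ _ e.symm (hS p hp))

end SerreClass

theorem artinian_mem_of_satisfiesC_maximalIdeal_general {R : Type u} [CommRing R] [Nontrivial R]
    (S : SerreClass R) {I : Ideal R} [IsSemiprimaryRing (R ⧸ I)] (hI : I ≤ Ring.jacobson R)
    (hC : S.SatisfiesC I) (hS : ∀ p : Ideal R, p.IsMaximal → S.Mem (R ⧸ p))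
    (M : Type u) [AddCommGroup M] [Module R M] [IsArtinian R M] : S.Mem M :=
  hC M (exists_pow_smul_eq_zero_of_le_jacobson hI) <|
    S.mem_of_isFiniteLength hS <| isFiniteLength_of_isTorsionBySet <|
      Submodule.torsionBySet_isTorsionBySet (I : Set R)

/-- Let `(R, m)` be a commutative Noetherian local ring and `S` a Serre subcategory containing
a nonzero module and satisfying the condition `C_m`.  Then every Artinian `R`-module belongs
to `S`; in particular every (nontrivial) Melkersson subcategory contains all Artinian
`R`-modules. -/
theorem artinian_mem_of_satisfiesC_maximalIdeal
    (R : Type u) [CommRing R] [IsNoetherianRing R] [IsLocalRing R] (S : SerreClass R)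
    (hne : ∃ M : ModuleCat.{u} R, Nontrivial M ∧ S.Mem M)
    (hC : S.SatisfiesC (IsLocalRing.maximalIdeal R)) :
    ∀ (M : Type u) [AddCommGroup M] [Module R M], IsArtinian R M → S.Mem M := by
  intro M _ _ _
  obtain ⟨N, _, hN⟩ := hne
  obtain ⟨p, hp, hRp⟩ := S.exists_isMaximal_mem_quotient hN
  obtain rfl := IsLocalRing.eq_maximalIdeal hp
  let _ := Ideal.Quotient.field (IsLocalRing.maximalIdeal R)
  exact artinian_mem_of_satisfiesC_maximalIdeal_general S
    (IsLocalRing.ringJacobson_eq_maximalIdeal R).ge hC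
    (fun _ hq ↦ IsLocalRing.eq_maximalIdeal hq ▸ hRp) M
end

section
/- Let R be a commutative Noetherian ring and let M be a Serre subcategory of the category of R-modules. Then M is a Melkersson subcategory (i.e., satisfies condition C_I for all ideals I of R) if and only if M satisfies condition C_{√I} with respect to the radical √I for every ideal I of R. -/
universe u

/-!
If `J` contains `I` and some power of `J` lies in `I`, then an `I`-torsion module `X` is also
`J`-torsion, while `(0 :_X J)` is a submodule of `(0 :_X I)`. So `C_J` implies `C_I`.
In a Noetherian ring, `J = √I` is such an ideal.
-/

theorem exists_pow_smul_eq_zero_of_pow_le {R M : Type*} [CommSemiring R] [AddCommMonoid M]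
    [Module R M] {I J : Ideal R} {k : ℕ} (hJI : J ^ k ≤ I) {x : M}
    (hx : ∃ n : ℕ, ∀ a ∈ I ^ n, a • x = 0) : ∃ n : ℕ, ∀ a ∈ J ^ n, a • x = 0 := by
  obtain ⟨n, hn⟩ := hx
  have hpow : J ^ (k * n) ≤ I ^ n := pow_mul J k n ▸ Ideal.pow_right_mono hJI n
  exact ⟨k * n, fun a ha => hn a (hpow ha)⟩

namespace SerreClass

variable {R : Type u} [CommRing R] {S : SerreClass R}

theorem mem_of_le {M : Type u} [AddCommGroup M] [Module R M] {N P : Submodule R M}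
    (hNP : N ≤ P) (hP : S.Mem P) : S.Mem N :=
  S.mem_of_iso _ _ (Submodule.submoduleOfEquivOfLe hNP) (S.mem_of_submodule _ _ hP)

theorem SatisfiesC.of_le_of_pow_le {I J : Ideal R} {k : ℕ} (hJ : S.SatisfiesC J)
    (hIJ : I ≤ J) (hJI : J ^ k ≤ I) : S.SatisfiesC I := by
  intro X _ _ hX hmem
  have hann : Submodule.torsionBySet R X (J : Set R) ≤ Submodule.torsionBySet R X (I : Set R) :=
    Submodule.torsionBySet_le_torsionBySet_of_subset hIJ
  exact hJ X (fun x => exists_pow_smul_eq_zero_of_pow_le hJI (hX x)) (mem_of_le hann hmem)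

end SerreClass

theorem melkersson_iff_satisfiesC_radical_general {R : Type u} [CommRing R]
    (hR : ∀ I : Ideal R, ∃ k : ℕ, I.radical ^ k ≤ I) (S : SerreClass R) :
    (∀ I : Ideal R, S.SatisfiesC I) ↔ (∀ I : Ideal R, S.SatisfiesC I.radical) := by
  refine ⟨fun h I => h I.radical, fun h I => ?_⟩
  obtain ⟨k, hk⟩ := hR I
  exact (h I).of_le_of_pow_le I.le_radical hk

/-- Let `R` be a commutative Noetherian ring and `M` a Serre subcategory of the category of
`R`-modules.  Then `M` is a Melkersson subcategory (it satisfies `C_I` for every ideal `I`)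
if and only if `M` satisfies `C_√I` for the radical of every ideal `I` of `R`. -/
theorem melkersson_iff_satisfiesC_radical
    (R : Type u) [CommRing R] [IsNoetherianRing R] (S : SerreClass R) :
    (∀ I : Ideal R, S.SatisfiesC I) ↔ (∀ I : Ideal R, S.SatisfiesC I.radical) :=
  melkersson_iff_satisfiesC_radical_general
    (fun I => I.exists_radical_pow_le_of_fg I.radical.fg_of_isNoetherianRing) S
end

section
/- Let (R, m) be a 2-dimensional commutative Noetherian local domain, let I be a nonzero ideal of R, and let X be an R-module with X = Γ_I(X). Then Supp(X) ⊆ Ass(X) ∪ {m}; in particular, if Ass(X) is a finite set then Supp(X) is a finite set. -/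
universe u

/-!
A minimal element of `Supp X` is an associated prime of `X`, and a maximal element of `Supp X` is a
maximal ideal, because the support is closed under enlarging primes. If `Supp X` has dimension at
most one, each of its elements is minimal or maximal. The support of an `I`-torsion module lies in
`V(I)`, whose dimension is smaller than that of `Spec R` when `I` contains a nonzerodivisor.
-/

section SupportDimLEOne

variable {R M : Type*} [CommRing R] [AddCommGroup M] [Module R M]

theorem mem_associatedPrimes_of_minimal_mem_support [IsNoetherianRing R] {p : PrimeSpectrum R}
    (hp : Minimal (· ∈ Module.support R M) p) : p.asIdeal ∈ associatedPrimes R M := by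
  obtain ⟨x, hx⟩ := Module.mem_support_iff_exists_annihilator.mp hp.prop
  have hmin : p.asIdeal ∈ (Submodule.span R {x}).annihilator.minimalPrimes :=
    ⟨⟨p.isPrime, hx⟩, fun q ⟨hq, hxq⟩ hqp ↦ hp.le_of_le (y := ⟨q, hq⟩)
      (Module.mem_support_iff_exists_annihilator.mpr ⟨x, hxq⟩) hqp⟩
  exact associatedPrimes.subset_of_injective (Submodule.injective_subtype _)
    (Module.associatedPrimes.minimalPrimes_annihilator_subset_associatedPrimes R _ hmin)

theorem isMaximal_of_maximal_mem_support {p : PrimeSpectrum R}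
    (hp : Maximal (· ∈ Module.support R M) p) : p.asIdeal.IsMaximal :=
  PrimeSpectrum.isMax_iff.mp fun _ hpq ↦ hp.le_of_ge (Module.mem_support_mono hpq hp.prop) hpq

theorem support_subset_ass_union_maximal_general [IsNoetherianRing R]
    (hM : Module.supportDim R M ≤ 1) :
    Module.support R M ⊆
      {p | p.asIdeal ∈ associatedPrimes R M} ∪ {p | p.asIdeal.IsMaximal} ∧
    ((associatedPrimes R M).Finite → Finite (MaximalSpectrum R) →
      (Module.support R M).Finite) := by
  have hsub : Module.support R M ⊆
      {p | p.asIdeal ∈ associatedPrimes R M} ∪ {p | p.asIdeal.IsMaximal} := by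
    intro p hp
    rcases Order.krullDim_le_one_iff.mp hM ⟨p, hp⟩ with hmin | hmax
    · exact .inl <| mem_associatedPrimes_of_minimal_mem_support
        ⟨hp, fun q hq hqp ↦ hmin (b := ⟨q, hq⟩) hqp⟩
    · exact .inr <| isMaximal_of_maximal_mem_support
        ⟨hp, fun q hq hpq ↦ hmax (b := ⟨q, hq⟩) hpq⟩
  refine ⟨hsub, fun hass _ ↦ .subset (.union ?_ ?_) hsub⟩
  · exact hass.preimage fun _ _ _ _ ↦ PrimeSpectrum.ext
  · exact (Set.finite_range MaximalSpectrum.toPrimeSpectrum).subset fun p hp ↦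
      ⟨⟨p.asIdeal, hp⟩, rfl⟩

end SupportDimLEOne

section IdealTorsion

variable {R M : Type*} [CommRing R] [AddCommGroup M] [Module R M] {I : Ideal R}

theorem support_subset_zeroLocus_of_forall_exists_pow_smul_eq_zero
    (hM : ∀ x : M, ∃ n : ℕ, ∀ a ∈ I ^ n, a • x = 0) :
    Module.support R M ⊆ PrimeSpectrum.zeroLocus I := by
  intro p hp
  obtain ⟨x, hx⟩ := Module.mem_support_iff_exists_annihilator.mp hp
  obtain ⟨n, hn⟩ := hM x
  exact Ideal.IsPrime.le_of_pow_le fun a ha ↦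
    hx ((Submodule.mem_annihilator_span_singleton x a).mpr (hn a ha))

theorem supportDim_le_ringKrullDim_quotient
    (hM : Module.support R M ⊆ PrimeSpectrum.zeroLocus I) :
    Module.supportDim R M ≤ ringKrullDim (R ⧸ I) :=
  ringKrullDim_quotient I ▸ Order.krullDim_le_of_strictMono (Set.inclusion hM) fun _ _ h ↦ h

theorem supportDim_add_one_le_ringKrullDim
    (hM : Module.support R M ⊆ PrimeSpectrum.zeroLocus I)
    {r : R} (hrI : r ∈ I) (hr : r ∈ nonZeroDivisors R) :
    Module.supportDim R M + 1 ≤ ringKrullDim R := by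
  calc
    Module.supportDim R M + 1 ≤ ringKrullDim (R ⧸ I) + 1 := by
      gcongr
      exact supportDim_le_ringKrullDim_quotient hM
    _ ≤ ringKrullDim R :=
      ringKrullDim_succ_le_of_surjective _ Ideal.Quotient.mk_surjective hr
        (Ideal.Quotient.eq_zero_iff_mem.mpr hrI)

theorem supportDim_le_of_ringKrullDim_le_add_one [NoZeroDivisors R] {d : WithBot ℕ∞}
    (hdim : ringKrullDim R ≤ d + 1) (hI : I ≠ ⊥)
    (hM : Module.support R M ⊆ PrimeSpectrum.zeroLocus I) : Module.supportDim R M ≤ d := by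
  obtain ⟨r, hrI, hr⟩ := Submodule.exists_mem_ne_zero_of_ne_bot hI
  have hadd : Module.supportDim R M + 1 ≤ d + 1 :=
    (supportDim_add_one_le_ringKrullDim hM hrI (mem_nonZeroDivisors_of_ne_zero hr)).trans hdim
  exact ENat.WithBot.add_le_add_one_right_iff.mp hadd

end IdealTorsion

theorem setOf_isMaximal_eq_singleton_closedPoint (R : Type*) [CommRing R] [IsLocalRing R] :
    {p : PrimeSpectrum R | p.asIdeal.IsMaximal} = {IsLocalRing.closedPoint R} := by
  ext p
  exact PrimeSpectrum.isMax_iff.symm.trans isMax_iff_eq_top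

/-- Let `(R, m)` be a `2`-dimensional commutative Noetherian local domain, `I` a nonzero
ideal of `R`, and `X` an `R`-module with `X = Γ_I(X)` (every element of `X` is annihilated by
some power of `I`).  Then `Supp(X) ⊆ Ass(X) ∪ {m}`; in particular, if `Ass(X)` is finite then
`Supp(X)` is finite. -/
theorem support_subset_ass_union_maximal
    (R : Type u) [CommRing R] [IsNoetherianRing R] [IsLocalRing R] [IsDomain R]
    (hdim : ringKrullDim R = 2) (I : Ideal R) (hI : I ≠ ⊥)
    (X : Type u) [AddCommGroup X] [Module R X]
    (hX : ∀ x : X, ∃ n : ℕ, ∀ a ∈ I ^ n, a • x = 0) :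
    Module.support R X ⊆
      {p : PrimeSpectrum R | p.asIdeal ∈ associatedPrimes R X} ∪
        {IsLocalRing.closedPoint R} ∧
    ((associatedPrimes R X).Finite → (Module.support R X).Finite) := by
  have hdimX : Module.supportDim R X ≤ 1 :=
    supportDim_le_of_ringKrullDim_le_add_one (hdim.trans one_add_one_eq_two.symm).le hI
      (support_subset_zeroLocus_of_forall_exists_pow_smul_eq_zero hX)
  obtain ⟨hsub, hfin⟩ := support_subset_ass_union_maximal_general hdimX
  rw [setOf_isMaximal_eq_singleton_closedPoint] at hsub
  exact ⟨hsub, fun hass ↦ hfin hass inferInstance⟩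
end
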